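/- Let θ'_1,…,θ'_N be i.i.d. uniform on the circle of circumference 2π, N ≥ 2, and 0 < δ < π/6. Then P(δ) := P{for all i ≠ j the circular included angle θ'_{ij} ≤ π − 2δ} satisfies the upper bound P(δ) ≤ ((π−4δ)/π)^{N−1} + (N−1)·4δ(π−2δ)^{N−2}/(2π)^{N−1}. -/

import Mathlib

open Real MeasureTheory

/-- Uniform probability measure on the interval [0, 2π]. -/
noncomputable def unifAngle : Measure ℝ :=
  (ENNReal.ofReal (1 / (2 * π))) • volume.restrict (Set.Icc 0 (2 * π))

/-- If two points are close to antipodal the circular distance is close to `π`. -/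
lemma aux_norm {w d : ℝ} (hw1 : -π ≤ w) (hw2 : w ≤ π)
    (h : ‖((w + π : ℝ) : AddCircle (2 * π))‖ ≤ π - d) : d ≤ |w| := by
  have hpi := Real.pi_pos
  have hne : (2 * π) ≠ 0 := by positivity
  have habs : |2 * π| / 2 = π := by rw [abs_of_pos (by positivity)]; ring
  rcases le_total w 0 with h0 | h0
  · have := (AddCircle.norm_coe_eq_abs_iff (p := 2 * π) (x := w + π) hne).2
      (by rw [habs, abs_le]; constructor <;> linarith)
    rw [this, abs_of_nonneg (by linarith)] at h
    rw [abs_of_nonpos h0]; linarith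
  · have e : ((w + π : ℝ) : AddCircle (2 * π)) = ((w - π : ℝ) : AddCircle (2 * π)) := by
      have : w + π = (w - π) + 2 * π := by ring
      rw [this, AddCircle.coe_add_period]
    rw [e] at h
    have := (AddCircle.norm_coe_eq_abs_iff (p := 2 * π) (x := w - π) hne).2
      (by rw [habs, abs_le]; constructor <;> linarith)
    rw [this, abs_of_nonpos (by linarith)] at h
    rw [abs_of_nonneg h0]; linarith

/-- Extended sign sequence. -/
def extS {n : ℕ} (s : Fin n → Bool) : ℕ → Bool
  | 0 => false
  | i + 1 => if h : i < n then s ⟨i, h⟩ else true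

/-- Number of switches before index `i`. -/
def sw (S : ℕ → Bool) : ℕ → ℕ
  | 0 => 0
  | i + 1 => sw S i + (if S i = S (i + 1) then 0 else 1)

lemma sw_mono (S : ℕ → Bool) : Monotone (sw S) :=
  monotone_nat_of_le_succ fun i => by simp [sw]

lemma sw_parity (S : ℕ → Bool) (h0 : S 0 = false) (i : ℕ) : S i = decide (sw S i % 2 = 1) := by
  induction i with
  | zero => simp [sw, h0]
  | succ i ih =>
    rw [sw]
    split_ifs with h
    · rw [← h, ih]; simp
    · have h2 : S (i + 1) = !(S i) := by
        revert h; cases S i <;> cases S (i + 1) <;> simp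
      rw [h2, ih]
      rcases Nat.mod_two_eq_zero_or_one (sw S i) with h' | h' <;> simp [h', Nat.add_mod]

/-- Total number of switches. -/
def tot {n : ℕ} (s : Fin n → Bool) : ℕ := sw (extS s) (n + 1)

lemma tot_odd {n : ℕ} (s : Fin n → Bool) : tot s % 2 = 1 := by
  have := sw_parity (extS s) rfl (n + 1)
  have h : extS s (n + 1) = true := by simp [extS]
  rw [h] at this
  simpa [tot] using this.symm

lemma tot_one_card (n : ℕ) :
    (Finset.univ.filter fun s : Fin n → Bool => tot s = 1).card ≤ n + 1 := by
  have hsub : (Finset.univ.filter fun s : Fin n → Bool => tot s = 1) ⊆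
      (Finset.range (n + 1)).image (fun m => fun i : Fin n => decide (m ≤ (i : ℕ))) := by
    intro s hs
    simp only [Finset.mem_filter, Finset.mem_univ, true_and] at hs
    have hex : ∃ m, sw (extS s) (m + 1) = 1 := ⟨n, hs⟩
    classical
    refine Finset.mem_image.2 ⟨Nat.find hex, ?_, ?_⟩
    · rw [Finset.mem_range]
      exact Nat.lt_succ_of_le (Nat.find_min' hex hs)
    · funext i
      have hle : sw (extS s) (i + 1) ≤ 1 := by
        rw [← hs]; exact sw_mono _ (by have := i.2; omega)
      have hp := sw_parity (extS s) rfl (i + 1)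
      have hv : extS s (i + 1) = s i := by simp [extS]
      rw [hv] at hp
      rw [hp]
      by_cases hi : Nat.find hex ≤ i
      · have h1 : 1 ≤ sw (extS s) (i + 1) := by
          conv_lhs => rw [← Nat.find_spec hex]
          exact sw_mono _ (by omega)
        have : sw (extS s) (i + 1) = 1 := le_antisymm hle h1
        simp [hi, this]
      · have h1 := Nat.find_min hex (not_le.1 hi)
        have : sw (extS s) (i + 1) = 0 := by omega
        simp [hi, this]
  calc _ ≤ _ := Finset.card_le_card hsub
    _ ≤ _ := Finset.card_image_le
    _ = n + 1 := by simp

/-- Extended position sequence. -/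
noncomputable def extP {n : ℕ} (p : Fin n → ℝ) : ℕ → ℝ
  | 0 => 0
  | i + 1 => if h : i < n then p ⟨i, h⟩ else π

/-- The region of positions compatible with a sign vector. -/
def reg (n : ℕ) (d : ℝ) (s : Fin n → Bool) : Set (Fin n → ℝ) :=
  {p | (∀ i, 0 ≤ p i ∧ p i ≤ π) ∧ (∀ i, s i = false → p i ≤ π - d) ∧
    (∀ i, s i = true → d ≤ p i) ∧ (∀ i j, s i ≠ s j → d ≤ |p i - p j|)}

lemma shift_mono {n : ℕ} (hn : 0 < n) {d : ℝ} {s : Fin n → Bool} {p : Fin n → ℝ}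
    (hp : p ∈ reg n d s) (hm : Monotone p) :
    Monotone fun i => extP p i - d * (sw (extS s) i : ℝ) := by
  obtain ⟨h1, h2, h3, h4⟩ := hp
  have hpi := Real.pi_pos
  apply monotone_nat_of_le_succ
  intro i
  have key : extP p i ≤ extP p (i + 1) ∧
      (extS s i ≠ extS s (i + 1) → d ≤ extP p (i + 1) - extP p i) := by
    rcases i with _ | i
    · by_cases h : 0 < n
      · simp only [extP, extS, h, dif_pos]
        refine ⟨(h1 _).1, fun hs => ?_⟩
        have := h3 ⟨0, h⟩ (by revert hs; cases s ⟨0, h⟩ <;> simp)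
        linarith
      · exact absurd hn h
    · by_cases h : i + 1 < n
      · have h' : i < n := by omega
        simp only [extP, extS, h, h', dif_pos]
        have hle : p ⟨i, h'⟩ ≤ p ⟨i + 1, h⟩ := hm (by simp)
        refine ⟨hle, fun hs => ?_⟩
        have := h4 _ _ hs
        rwa [abs_sub_comm, abs_of_nonneg (by linarith)] at this
      · by_cases h' : i < n
        · simp only [extP, extS, h, h', dif_pos, dif_neg, not_false_eq_true]
          refine ⟨(h1 _).2, fun hs => ?_⟩
          have := h2 ⟨i, h'⟩ (by revert hs; cases s ⟨i, h'⟩ <;> simp)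
          linarith
        · simp [extP, extS, h, h']
  simp only [sw]
  split_ifs with h
  · simp only [add_zero]; linarith [key.1]
  · have := key.2 h
    push_cast; linarith

lemma shift_mem {n : ℕ} (hn : 0 < n) {d : ℝ} {s : Fin n → Bool} {p : Fin n → ℝ}
    (hp : p ∈ reg n d s) (hm : Monotone p) :
    (∀ i : Fin n, 0 ≤ p i - d * (sw (extS s) (i + 1) : ℝ) ∧
      p i - d * (sw (extS s) (i + 1) : ℝ) ≤ π - d * tot s) ∧
    Monotone fun i : Fin n => p i - d * (sw (extS s) (i + 1) : ℝ) := by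
  have H := shift_mono hn hp hm
  have e : ∀ i : Fin n, extP p (i + 1) = p i := fun i => by simp [extP]
  refine ⟨fun i => ⟨?_, ?_⟩, fun i j hij => ?_⟩
  · have := H (Nat.zero_le (i + 1))
    simp only [e] at this
    simpa [extP, sw] using this
  · have := H (show (i : ℕ) + 1 ≤ n + 1 by have := i.2; omega)
    simp only [e] at this
    simpa [extP, tot] using this
  · have := H (show (i : ℕ) + 1 ≤ j + 1 by have : (i : ℕ) ≤ j := hij; omega)
    simpa only [e] using this

/-- Tuples sorted by the permutation `σ`. -/
def srt (n : ℕ) (σ : Equiv.Perm (Fin n)) : Set (Fin n → ℝ) := {p | Monotone (p ∘ σ)}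

lemma srt_meas (n : ℕ) (σ : Equiv.Perm (Fin n)) : MeasurableSet (srt n σ) := by
  apply IsClosed.measurableSet
  have : srt n σ = ⋂ (i : Fin n) (j : Fin n) (_ : i ≤ j), {p | p (σ i) ≤ p (σ j)} := by
    ext p; simp [srt, Monotone]
  rw [this]
  refine isClosed_iInter fun i => isClosed_iInter fun j => isClosed_iInter fun _ => ?_
  exact isClosed_le (continuous_apply _) (continuous_apply _)

lemma null_diag (n : ℕ) (i j : Fin n) (hij : i ≠ j) :
    volume {p : Fin n → ℝ | p i = p j} = 0 := by
  let S : Submodule ℝ (Fin n → ℝ) :=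
    LinearMap.ker (LinearMap.proj (R := ℝ) (φ := fun _ : Fin n => ℝ) i - LinearMap.proj j)
  have hS : (S : Set (Fin n → ℝ)) = {p | p i = p j} := by
    ext p; simp [S, sub_eq_zero]
  rw [← hS]
  apply Measure.addHaar_submodule
  intro htop
  have : (Pi.single i (1 : ℝ) : Fin n → ℝ) ∈ S := by rw [htop]; trivial
  have h2 : (Pi.single i (1 : ℝ) : Fin n → ℝ) ∈ (S : Set (Fin n → ℝ)) := this
  rw [hS] at h2
  simp [hij.symm] at h2

lemma srt_aedisj (n : ℕ) (B : Set (Fin n → ℝ)) :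
    Pairwise (Function.onFun (AEDisjoint volume) fun σ => srt n σ ∩ B) := by
  intro σ τ hst
  have hsub : (srt n σ ∩ B) ∩ (srt n τ ∩ B) ⊆
      ⋃ (i : Fin n) (j : Fin n) (_ : i ≠ j), {p : Fin n → ℝ | p i = p j} := by
    rintro p ⟨⟨h1, _⟩, ⟨h2, _⟩⟩
    have h := Tuple.unique_monotone (show Monotone (p ∘ σ) from h1) (show Monotone (p ∘ τ) from h2)
    obtain ⟨k, hk⟩ : ∃ k, σ k ≠ τ k := by
      by_contra hc; push Not at hc; exact hst (Equiv.ext hc)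
    simp only [Set.mem_iUnion]
    exact ⟨σ k, τ k, hk, congrFun h k⟩
  refine measure_mono_null hsub ?_
  simp only [measure_iUnion_null_iff]
  exact fun i j hij => null_diag n i j hij

lemma sum_srt_le (n : ℕ) (a : ℝ) :
    ∑ σ : Equiv.Perm (Fin n), volume (srt n σ ∩ Set.pi Set.univ fun _ => Set.Icc 0 a)
      ≤ ENNReal.ofReal a ^ n := by
  have hB : MeasurableSet (Set.pi Set.univ fun _ : Fin n => Set.Icc (0 : ℝ) a) :=
    MeasurableSet.univ_pi fun _ => measurableSet_Icc
  have := tsum_meas_le_meas_iUnion_of_disjoint₀ volume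
    (As := fun σ => srt n σ ∩ Set.pi Set.univ fun _ : Fin n => Set.Icc (0 : ℝ) a)
    (fun σ => ((srt_meas n σ).inter hB).nullMeasurableSet) (srt_aedisj n _)
  rw [tsum_fintype] at this
  refine this.trans ?_
  refine (measure_mono (Set.iUnion_subset fun σ => Set.inter_subset_right)).trans ?_
  rw [volume_pi, Measure.pi_pi]
  simp

lemma piece_le {n : ℕ} (hn : 0 < n) (d : ℝ) (s : Fin n → Bool) (σ : Equiv.Perm (Fin n)) :
    volume (reg n d (s ∘ σ.symm) ∩ srt n σ) ≤
      volume (srt n σ ∩ Set.pi Set.univ fun _ => Set.Icc 0 (π - d * tot s)) := by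
  set v : Fin n → ℝ := fun j => -(d * (sw (extS s) ((σ.symm j : Fin n) + 1) : ℝ)) with hv
  rw [← measure_preimage_add_right volume v
    (srt n σ ∩ Set.pi Set.univ fun _ => Set.Icc 0 (π - d * tot s))]
  apply measure_mono
  rintro p ⟨⟨h1, h2, h3, h4⟩, hm⟩
  have hp : p ∘ σ ∈ reg n d s := by
    refine ⟨fun i => h1 _, fun i hi => h2 _ (by simpa using hi), fun i hi => h3 _ (by simpa using hi),
      fun i j hij => h4 _ _ (by simpa using hij)⟩
  obtain ⟨hA, hB⟩ := shift_mem hn hp hm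
  refine ⟨?_, ?_⟩
  · intro i j hij
    have := hB hij
    simpa [hv, sub_eq_add_neg] using this
  · intro j _
    have := hA (σ.symm j)
    simpa [hv, sub_eq_add_neg] using this

lemma sum_reg_le {n : ℕ} (hn : 0 < n) (d : ℝ) :
    ∑ s : Fin n → Bool, volume (reg n d s) ≤
      ∑ s : Fin n → Bool, ENNReal.ofReal (π - d * tot s) ^ n := by
  calc ∑ s : Fin n → Bool, volume (reg n d s)
      ≤ ∑ s : Fin n → Bool, ∑ σ : Equiv.Perm (Fin n), volume (reg n d s ∩ srt n σ) := by
        refine Finset.sum_le_sum fun s _ => ?_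
        have : reg n d s ⊆ ⋃ σ : Equiv.Perm (Fin n), reg n d s ∩ srt n σ := fun p hp =>
          Set.mem_iUnion.2 ⟨Tuple.sort p, hp, Tuple.monotone_sort p⟩
        exact (measure_mono this).trans (measure_iUnion_fintype_le _ _)
    _ = ∑ σ : Equiv.Perm (Fin n), ∑ s : Fin n → Bool, volume (reg n d s ∩ srt n σ) :=
        Finset.sum_comm
    _ = ∑ σ : Equiv.Perm (Fin n), ∑ s : Fin n → Bool,
          volume (reg n d (s ∘ σ.symm) ∩ srt n σ) := by
        refine Finset.sum_congr rfl fun σ _ => ?_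
        exact (Equiv.sum_comp (Equiv.arrowCongr σ (Equiv.refl Bool))
          (fun s => volume (reg n d s ∩ srt n σ))).symm
    _ ≤ ∑ σ : Equiv.Perm (Fin n), ∑ s : Fin n → Bool,
          volume (srt n σ ∩ Set.pi Set.univ fun _ => Set.Icc 0 (π - d * tot s)) :=
        Finset.sum_le_sum fun σ _ => Finset.sum_le_sum fun s _ => piece_le hn d s σ
    _ = ∑ s : Fin n → Bool, ∑ σ : Equiv.Perm (Fin n),
          volume (srt n σ ∩ Set.pi Set.univ fun _ => Set.Icc 0 (π - d * tot s)) :=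
        Finset.sum_comm
    _ ≤ _ := Finset.sum_le_sum fun s _ => sum_srt_le n _

/-- The final real inequality. -/
lemma final_ineq (n : ℕ) (hn : 0 < n) (d : ℝ) (hd : 0 ≤ d) (hd3 : 3 * d ≤ π) :
    ∑ s : Fin n → Bool, (max (π - d * tot s) 0) ^ n ≤
      (2 * (π - 2 * d)) ^ n + n * (2 * d * (π - d) ^ (n - 1)) := by
  have hpi := Real.pi_pos
  set a := π - d with ha
  set b := π - 3 * d with hb
  have hb0 : 0 ≤ b := by linarith
  have hab : b ≤ a := by linarith
  have ha0 : 0 ≤ a := by linarith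
  have hpow : b ^ n ≤ a ^ n := pow_le_pow_left₀ hb0 hab n
  have h1 : ∑ s : Fin n → Bool, (max (π - d * tot s) 0) ^ n ≤
      ∑ s : Fin n → Bool, (b ^ n + if tot s = 1 then (a ^ n - b ^ n) else 0) := by
    refine Finset.sum_le_sum fun s _ => ?_
    have hodd := tot_odd s
    split_ifs with h
    · rw [h]; simp only [Nat.cast_one, mul_one]; rw [max_eq_left ha0]; linarith
    · have h3 : 3 ≤ tot s := by omega
      have h3' : (3 : ℝ) ≤ tot s := by exact_mod_cast h3
      rw [add_zero]
      refine pow_le_pow_left₀ (le_max_right _ _) (max_le ?_ hb0) n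
      nlinarith
  have h2 : ∑ s : Fin n → Bool, (b ^ n + if tot s = 1 then (a ^ n - b ^ n) else 0) ≤
      2 ^ n * b ^ n + (n + 1) * (a ^ n - b ^ n) := by
    rw [Finset.sum_add_distrib, ← Finset.sum_filter, Finset.sum_const, Finset.sum_const]
    have hc : ((Finset.univ.filter fun s : Fin n → Bool => tot s = 1).card : ℝ) ≤ n + 1 := by
      exact_mod_cast tot_one_card n
    simp only [nsmul_eq_mul, Finset.card_univ, Fintype.card_pi, Fintype.card_bool,
      Finset.prod_const, Fintype.card_fin]
    push_cast
    have : 0 ≤ a ^ n - b ^ n := by linarith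
    gcongr
  refine h1.trans (h2.trans ?_)
  obtain ⟨m, rfl⟩ : ∃ m, n = m + 1 := ⟨n - 1, by omega⟩
  have e1 : 2 * (π - 2 * d) = b + a := by rw [ha, hb]; ring
  have e2 : 2 * d = a - b := by rw [ha, hb]; ring
  rw [e1, e2, add_pow]
  have key : ∀ j ∈ Finset.range (m + 1 + 1),
      b ^ (m + 1) * ((m + 1).choose j : ℝ) +
        ((if j = 0 then a ^ (m + 1) - b ^ (m + 1) else 0) +
         (if j = 1 then ((m : ℝ) + 1) * (b * a ^ m - b ^ (m + 1)) else 0)) ≤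
      b ^ j * a ^ (m + 1 - j) * ((m + 1).choose j : ℝ) := by
    intro j hj
    rw [Finset.mem_range] at hj
    rcases j with _ | _ | j
    · simp
    · simp; apply le_of_eq; ring
    · have : b ^ (m + 1) ≤ b ^ (j + 2) * a ^ (m + 1 - (j + 2)) := by
        calc b ^ (m + 1) = b ^ (j + 2) * b ^ (m + 1 - (j + 2)) := by
              rw [← pow_add]; congr 1; omega
          _ ≤ _ := by gcongr
      simp only [Nat.add_eq_zero_iff, one_ne_zero, and_false, if_false, add_zero,
        Nat.add_eq_right]
      exact mul_le_mul_of_nonneg_right this (by positivity)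
  have hs := Finset.sum_le_sum key
  rw [Finset.sum_add_distrib, Finset.sum_add_distrib, ← Finset.mul_sum] at hs
  have hch : ∑ j ∈ Finset.range (m + 1 + 1), ((m + 1).choose j : ℝ) = 2 ^ (m + 1) := by
    exact_mod_cast Nat.sum_range_choose (m + 1)
  rw [hch] at hs
  simp only [Finset.sum_ite_eq', Finset.mem_range] at hs
  rw [if_pos (by omega), if_pos (by omega)] at hs
  refine le_trans (le_of_eq ?_) (add_le_add_left hs _)
  simp only [Nat.add_sub_cancel]
  push_cast
  ring

instance two_pi_fact : Fact (0 < 2 * π) := ⟨by positivity⟩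

/-- The lifted section based at angle zero. -/
def sec (n : ℕ) (d : ℝ) : Set (Fin n → ℝ) :=
  {p | (∀ i, ‖((p i : ℝ) : AddCircle (2 * π))‖ ≤ π - d) ∧
    ∀ i j, i ≠ j → ‖((p i - p j : ℝ) : AddCircle (2 * π))‖ ≤ π - d}

lemma sec_vol {n : ℕ} (d : ℝ) :
    volume (sec n d ∩ Set.pi Set.univ fun _ => Set.Icc 0 (2 * π)) ≤
      ∑ s : Fin n → Bool, volume (reg n d s) := by
  have hpi := Real.pi_pos
  let v : (Fin n → Bool) → Fin n → ℝ := fun s i => if s i then -π else 0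
  have hsub : (sec n d ∩ Set.pi Set.univ fun _ => Set.Icc 0 (2 * π)) ⊆
      ⋃ s : Fin n → Bool, (fun p => p + v s) ⁻¹' reg n d s := by
    rintro p ⟨⟨h1, h2⟩, hb⟩
    rw [Set.mem_iUnion]
    refine ⟨fun i => decide (π < p i), ?_⟩
    have hbox : ∀ i, 0 ≤ p i ∧ p i ≤ 2 * π := fun i => hb i trivial
    have hv : ∀ i, (p + v fun i => decide (π < p i)) i = if π < p i then p i - π else p i := by
      intro i
      by_cases h : π < p i <;> simp [v, h, sub_eq_add_neg]
    simp only [Set.mem_preimage, reg, Set.mem_ofPred_eq, hv, decide_eq_true_eq, decide_eq_false_iff_not]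
    have main : ∀ i j, π < p i → ¬ π < p j → d ≤ |p i - π - p j| := by
      intro i j hi hj
      apply aux_norm
      · linarith [hbox i, hbox j]
      · linarith [hbox i, hbox j]
      · have : p i - π - p j + π = p i - p j := by ring
        rw [this]
        exact h2 i j (by rintro rfl; exact hj hi)
    refine ⟨fun i => ?_, fun i hi => ?_, fun i hi => ?_, fun i j hij => ?_⟩
    · have := hbox i
      split_ifs with h
      · constructor <;> linarith
      · constructor <;> linarith
    · rw [if_neg hi]
      have := hbox i
      have h := aux_norm (w := p i - π) (d := d) (by linarith) (by linarith)
        (by rw [sub_add_cancel]; exact h1 i)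
      rw [abs_of_nonpos (by linarith)] at h
      linarith
    · rw [if_pos hi]
      have := hbox i
      have h := aux_norm (w := p i - π) (d := d) (by linarith) (by linarith)
        (by rw [sub_add_cancel]; exact h1 i)
      rwa [abs_of_nonneg (by linarith)] at h
    · by_cases hi : π < p i <;> by_cases hj : π < p j
      · simp [hi, hj] at hij
      · rw [if_pos hi, if_neg hj]; exact main i j hi hj
      · rw [if_neg hi, if_pos hj, abs_sub_comm]; exact main j i hj hi
      · simp [hi, hj] at hij
  refine (measure_mono hsub).trans ((measure_iUnion_fintype_le _ _).trans ?_)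
  refine Finset.sum_le_sum fun s _ => ?_
  rw [measure_preimage_add_right]

instance unif_prob : IsProbabilityMeasure unifAngle := ⟨by
  have hpi := Real.pi_pos
  rw [unifAngle]
  simp only [Measure.smul_apply, Measure.restrict_apply_univ, Real.volume_Icc, smul_eq_mul]
  rw [← ENNReal.ofReal_mul (by positivity), sub_zero, one_div,
    inv_mul_cancel₀ (by positivity), ENNReal.ofReal_one]⟩

lemma pi_unif (n : ℕ) : (Measure.pi fun _ : Fin n => unifAngle) =
    ENNReal.ofReal (1 / (2 * π)) ^ n •
      (volume : Measure (Fin n → ℝ)).restrict (Set.pi Set.univ fun _ => Set.Icc 0 (2 * π)) := by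
  refine (Measure.pi_eq fun s hs => ?_)
  rw [Measure.smul_apply, volume_pi, Measure.restrict_pi_pi, Measure.pi_pi]
  simp [unifAngle, Finset.prod_mul_distrib]

lemma unif_mk : MeasurePreserving (fun x : ℝ => (x : AddCircle (2 * π))) unifAngle
    (AddCircle.haarAddCircle (T := 2 * π)) := by
  have h := AddCircle.measurePreserving_mk (2 * π) 0
  rw [zero_add] at h
  refine ⟨h.measurable, ?_⟩
  have hpi := Real.pi_pos
  rw [unifAngle, Measure.map_smul, Measure.restrict_congr_set Ioc_ae_eq_Icc.symm, h.map_eq,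
    AddCircle.volume_eq_smul_haarAddCircle, smul_smul, ← ENNReal.ofReal_mul (by positivity),
    one_div, inv_mul_cancel₀ (by positivity), ENNReal.ofReal_one, one_smul]

/-- Good configurations on the circle. -/
def good (n : ℕ) (d : ℝ) : Set (Fin n → AddCircle (2 * π)) :=
  {φ | ∀ i j, i ≠ j → ‖φ i - φ j‖ ≤ π - d}

/-- Circle version of the section. -/
def secC (n : ℕ) (d : ℝ) : Set (Fin n → AddCircle (2 * π)) :=
  {φ | (∀ i, ‖φ i‖ ≤ π - d) ∧ ∀ i j, i ≠ j → ‖φ i - φ j‖ ≤ π - d}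

lemma good_meas (n : ℕ) (d : ℝ) : MeasurableSet (good n d) := by
  apply IsClosed.measurableSet
  simp only [good, Set.ofPred_forall]
  refine isClosed_iInter fun i => isClosed_iInter fun j => isClosed_iInter fun _ => ?_
  exact isClosed_le (by fun_prop) continuous_const

lemma secC_meas (n : ℕ) (d : ℝ) : MeasurableSet (secC n d) := by
  apply IsClosed.measurableSet
  simp only [secC, Set.ofPred_and, Set.ofPred_forall]
  refine IsClosed.inter (isClosed_iInter fun i => isClosed_le (by fun_prop) continuous_const) ?_
  refine isClosed_iInter fun i => isClosed_iInter fun j => isClosed_iInter fun _ => ?_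
  exact isClosed_le (by fun_prop) continuous_const

lemma good_eq (n : ℕ) (d : ℝ) :
    (Measure.pi fun _ : Fin (n + 1) => AddCircle.haarAddCircle (T := 2 * π)) (good (n + 1) d) =
    (Measure.pi fun _ : Fin n => AddCircle.haarAddCircle (T := 2 * π)) (secC n d) := by
  have hmp := measurePreserving_piFinSuccAbove
    (fun _ : Fin (n + 1) => AddCircle.haarAddCircle (T := 2 * π)) 0
  have hmp' := hmp.symm
  rw [← hmp'.measure_preimage (good_meas _ d).nullMeasurableSet,
    Measure.prod_apply (hmp'.measurable (good_meas _ d))]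
  have : ∀ t : AddCircle (2 * π),
      (Measure.pi fun _ : Fin n => AddCircle.haarAddCircle (T := 2 * π))
        (Prod.mk t ⁻¹' ((MeasurableEquiv.piFinSuccAbove
          (fun _ : Fin (n + 1) => AddCircle (2 * π)) 0).symm ⁻¹' good (n + 1) d)) =
      (Measure.pi fun _ : Fin n => AddCircle.haarAddCircle (T := 2 * π)) (secC n d) := by
    intro t
    rw [← measure_preimage_add_right _ (fun _ => -t) (secC n d)]
    congr 1
    ext φ
    have e0 : (MeasurableEquiv.piFinSuccAbove
          (fun _ : Fin (n + 1) => AddCircle (2 * π)) 0).symm (t, φ) 0 = t := rfl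
    have es : ∀ i : Fin n, (MeasurableEquiv.piFinSuccAbove
          (fun _ : Fin (n + 1) => AddCircle (2 * π)) 0).symm (t, φ) i.succ = φ i := fun i => rfl
    simp only [Set.mem_preimage, good, secC, Set.mem_ofPred_eq, Pi.add_apply,
      ← sub_eq_add_neg, sub_sub_sub_cancel_right]
    constructor
    · intro h
      refine ⟨fun i => ?_, fun i j hij => ?_⟩
      · have := h i.succ 0 (Fin.succ_ne_zero i)
        rwa [e0, es] at this
      · have := h i.succ j.succ (fun h => hij (Fin.succ_injective _ h))
        rwa [es, es] at this
    · rintro ⟨h1, h2⟩ i j hij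
      rcases Fin.eq_zero_or_eq_succ i with rfl | ⟨i, rfl⟩ <;>
        rcases Fin.eq_zero_or_eq_succ j with rfl | ⟨j, rfl⟩
      · exact absurd rfl hij
      · rw [e0, es, norm_sub_rev]; exact h1 j
      · rw [e0, es]; exact h1 i
      · rw [es, es]; exact h2 i j (fun h => hij (congrArg Fin.succ h))
  simp only [this]
  simp

/-- For N ≥ 2 i.i.d. points uniform on the circle of circumference 2π and
0 < δ < π/6, the probability P(δ) that every pairwise circular included angle
(shorter arc distance) is at most π − 2δ is bounded above by
((π−4δ)/π)^{N−1} + (N−1)·4δ(π−2δ)^{N−2}/(2π)^{N−1}. -/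
theorem stmt_9 (N : ℕ) (hN : 2 ≤ N) (δ : ℝ) (hδ1 : 0 < δ) (hδ2 : δ < π / 6) :
    ((Measure.pi fun _ : Fin N => unifAngle)
      {θ : Fin N → ℝ | ∀ i j, i ≠ j →
        ‖((θ i - θ j : ℝ) : AddCircle (2 * π))‖ ≤ π - 2 * δ}).toReal
    ≤ ((π - 4 * δ) / π) ^ (N - 1) + ((N : ℝ) - 1) * (4 * δ * (π - 2 * δ) ^ (N - 2)) / (2 * π) ^ (N - 1) := by
  have hpi := Real.pi_pos
  obtain ⟨n, rfl⟩ : ∃ n, N = n + 1 := ⟨N - 1, by omega⟩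
  have hn : 0 < n := by omega
  have hmp := fun m : ℕ => measurePreserving_pi (fun _ : Fin m => unifAngle)
    (fun _ : Fin m => AddCircle.haarAddCircle (T := 2 * π)) (fun _ => unif_mk)
  have e1 : (Measure.pi fun _ : Fin (n + 1) => unifAngle)
      {θ : Fin (n + 1) → ℝ | ∀ i j, i ≠ j →
        ‖((θ i - θ j : ℝ) : AddCircle (2 * π))‖ ≤ π - 2 * δ} =
      ENNReal.ofReal (1 / (2 * π)) ^ n * volume (sec n (2 * δ) ∩
        Set.pi Set.univ fun _ => Set.Icc 0 (2 * π)) := by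
    have a1 := (hmp (n + 1)).measure_preimage (good_meas (n + 1) (2 * δ)).nullMeasurableSet
    have a2 := (hmp n).measure_preimage (secC_meas n (2 * δ)).nullMeasurableSet
    rw [good_eq, ← a2] at a1
    have b2 := (hmp n).measurable (secC_meas n (2 * δ))
    rw [pi_unif n, Measure.smul_apply, Measure.restrict_apply b2] at a1
    exact a1
  have e2 : volume (sec n (2 * δ) ∩ Set.pi Set.univ fun _ => Set.Icc 0 (2 * π)) ≤
      ENNReal.ofReal (∑ s : Fin n → Bool, (max (π - 2 * δ * tot s) 0) ^ n) := by
    refine (sec_vol _).trans ((sum_reg_le hn _).trans (le_of_eq ?_))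
    rw [ENNReal.ofReal_sum_of_nonneg (fun s _ => pow_nonneg (le_max_right _ _) _)]
    refine Finset.sum_congr rfl fun s _ => ?_
    rw [ENNReal.ofReal_pow (le_max_right _ _)]
    congr 1
    rw [ENNReal.ofReal_max]; simp
  have e3 := final_ineq n hn (2 * δ) (by linarith) (by linarith)
  rw [e1]
  refine ENNReal.toReal_le_of_le_ofReal ?_ ?_
  · simp only [Nat.add_sub_cancel]
    have h1 : 0 ≤ (π - 4 * δ) / π := div_nonneg (by linarith) hpi.le
    have h2 : 0 ≤ π - 2 * δ := by linarith
    push_cast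
    rw [add_sub_cancel_right]
    positivity
  · refine (mul_le_mul_right (e2.trans (ENNReal.ofReal_le_ofReal e3)) _).trans (le_of_eq ?_)
    rw [← ENNReal.ofReal_pow (by positivity), ← ENNReal.ofReal_mul (by positivity)]
    congr 1
    simp only [Nat.add_sub_cancel]
    have : n + 1 - 2 = n - 1 := by omega
    rw [this]
    push_cast
    rw [add_sub_cancel_right, mul_add, ← mul_pow]
    have e : 1 / (2 * π) * (2 * (π - 2 * (2 * δ))) = (π - 4 * δ) / π := by
      field_simp; ring
    rw [e, one_div, inv_pow]
    ring
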